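/- arXiv:1111.2901 — 2 statements merged into one kernel-verified Lean document; each statement's English description precedes it below -/
import Mathlib

section
/- Let A be a left self-injective semiprimary ring. Then every simple left A-module embeds into A as a left module; equivalently, Hom_A(S, A) ≠ 0 for every simple left A-module S. -/
universe u v

open Cardinal

/-- A ring is *semiprimary* if its Jacobson radical `J` is nilpotent
(`J ^ n = 0`, expressed elementwise: every product of `n` elements of `J` vanishes)
and the quotient ring `A / J` is a semisimple ring. -/
def IsSemiprimary (A : Type*) [Ring A] : Prop :=
  IsSemisimpleRing (RingCon.Quotient (⊥ : TwoSidedIdeal A).jacobson.ringCon) ∧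
  ∃ n : ℕ, 0 < n ∧ ∀ f : Fin n → A,
    (∀ i, f i ∈ Ideal.jacobson (⊥ : Ideal A)) → (List.ofFn f).prod = 0

/-- A ring is *quasi-Frobenius* if it is left self-injective and left artinian. -/
def IsQuasiFrobenius (A : Type*) [Ring A] : Prop :=
  Module.Injective A A ∧ IsArtinianRing A

/-!
Let `J` be the Jacobson radical and `Soc` the left socle of `A`. Since the left annihilator of a
semisimple module contains `J`, and `A / J` is semisimple, a simple module embeds into every
semisimple module whose annihilator kills it; so it suffices that `Soc` has annihilator exactly
`J`. Self-injectivity makes two assignments injective: `I ↦ Soc * I` on left ideals containing `J`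
(because `Soc * I = 0` forces `I ≤ J`), and `V ↦ ann V` on semisimple two-sided ideals (because
isomorphic simple left ideals are right multiples of each other). Their composite is an injective
self-map of the finite set of two-sided ideals containing `J`, hence surjective, and `J` itself
is the annihilator of some `Soc * I ≤ Soc`.
-/

section Socle

variable (R M : Type*) [Ring R] [AddCommGroup M] [Module R M]

/-- The socle of a module: the sum of its simple submodules. -/
def socle : Submodule R M := sSup {N | IsSimpleModule R N}

instance isSemisimpleModule_socle : IsSemisimpleModule R (socle R M) := by
  rw [socle, sSup_eq_iSup]
  refine isSemisimpleModule_biSup_of_isSemisimpleModule_submodule fun N hN => ?_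
  have : IsSimpleModule R N := hN
  infer_instance

theorem isFullyInvariant_socle : (socle R M).IsFullyInvariant := by
  refine fun f => sSup_le fun N hN => ?_
  have : IsSimpleModule R N := hN
  rcases (f.domRestrict N).injective_or_eq_zero with hf | hf
  · have hfN : IsSimpleModule R (N.map f) := by
      rw [← LinearMap.range_domRestrict]
      exact .congr (LinearEquiv.ofInjective _ hf).symm
    exact Submodule.map_le_iff_le_comap.mp (le_sSup hfN)
  · intro x hx
    rw [Submodule.mem_comap, show f x = 0 from LinearMap.congr_fun hf ⟨x, hx⟩]
    exact zero_mem _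

instance isTwoSided_socle : Ideal.IsTwoSided (socle R R) :=
  isFullyInvariant_iff_isTwoSided.mp (isFullyInvariant_socle R R)

variable {R M}

theorem isSemisimpleModule_of_le_socle {N : Submodule R M} (h : N ≤ socle R M) :
    IsSemisimpleModule R N :=
  .of_injective (Submodule.inclusion h) (Submodule.inclusion_injective h)

theorem eq_bot_of_disjoint_socle [IsAtomic (Submodule R M)] {N : Submodule R M}
    (h : Disjoint (socle R M) N) : N = ⊥ := by
  refine (eq_bot_or_exists_atom_le N).resolve_right ?_
  rintro ⟨T, hT, hTN⟩
  exact hT.1 (le_bot_iff.mp (h (le_sSup (isSimpleModule_iff_isAtom.mpr hT)) hTN))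

end Socle

theorem finite_setOf_isTwoSided (R : Type*) [Ring R] [IsSemisimpleRing R] :
    {I : Ideal R | I.IsTwoSided}.Finite := by
  simp_rw [← isFullyInvariant_iff_isTwoSided]
  exact Finite.of_equiv _ (OrderIso.setIsotypicComponents (R := R) (M := R)).toEquiv

section SemisimpleQuotient

variable {R : Type*} [Ring R] {K : Ideal R} [K.IsTwoSided] [IsSemisimpleRing (R ⧸ K)]

theorem isSemisimpleModule_of_le_annihilator {M : Type*} [AddCommGroup M] [Module R M]
    (h : K ≤ Module.annihilator R M) : IsSemisimpleModule R M := by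
  rw [← SetLike.coe_subset_coe, ← Module.isTorsionBySet_iff_subset_annihilator] at h
  let := h.module
  exact (h.semilinearMap.isSemisimpleModule_iff_of_bijective Function.bijective_id).mpr
    inferInstance

theorem isSemisimpleModule_quotient_of_le {I : Ideal R} (h : K ≤ I) :
    IsSemisimpleModule R (R ⧸ I) := by
  refine isSemisimpleModule_of_le_annihilator (K := K) fun k hk => Module.mem_annihilator.mpr ?_
  rintro ⟨x⟩
  exact (Submodule.Quotient.mk_eq_zero I).mpr (h (K.mul_mem_right x hk))

variable (K) in
theorem exists_mem_forall_sub_mul_mem (I : Ideal R) : ∃ e ∈ I, ∀ x ∈ I, x - x * e ∈ K := by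
  obtain ⟨e', he', hI⟩ := IsSemisimpleRing.ideal_eq_span_idempotent (I.map (Ideal.Quotient.mk K))
  obtain ⟨e, he, rfl⟩ := (Ideal.mem_map_iff_of_surjective _ Ideal.Quotient.mk_surjective).mp
    (hI ▸ Ideal.mem_span_singleton_self e')
  refine ⟨e, he, fun x hx => Ideal.Quotient.eq.mp ?_⟩
  obtain ⟨y, hy⟩ := Ideal.mem_span_singleton'.mp
    (hI ▸ Ideal.mem_map_of_mem (Ideal.Quotient.mk K) hx)
  rw [map_mul, ← hy, mul_assoc, he'.eq]

variable (K) in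
theorem finite_setOf_le_isTwoSided : {I : Ideal R | K ≤ I ∧ I.IsTwoSided}.Finite := by
  refine ((finite_setOf_isTwoSided (R ⧸ K)).image (Ideal.comap (Ideal.Quotient.mk K))).subset ?_
  rintro I ⟨hKI, hI⟩
  have := RingHomSurjective.mk (Ideal.Quotient.mk_surjective (I := K))
  refine ⟨I.map (Ideal.Quotient.mk K), inferInstanceAs (Ideal.IsTwoSided _), ?_⟩
  rw [Ideal.comap_map_of_surjective' _ Ideal.Quotient.mk_surjective, Ideal.mk_ker,
    sup_eq_left.mpr hKI]

end SemisimpleQuotient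

theorem exists_linearMap_ne_zero_of_annihilator_le {R S M : Type*} [Ring R]
    [AddCommGroup S] [Module R S] [IsSimpleModule R S] [AddCommGroup M] [Module R M]
    [IsSemisimpleModule R (R ⧸ Module.annihilator R M)]
    (h : Module.annihilator R M ≤ Module.annihilator R S) : ∃ f : S →ₗ[R] M, f ≠ 0 := by
  have := IsSimpleModule.nontrivial R S
  obtain ⟨s, hs⟩ := exists_ne (0 : S)
  let toS : (R ⧸ Module.annihilator R M) →ₗ[R] S :=
    Submodule.liftQ _ (LinearMap.toSpanSingleton R S s) fun r hr =>
      Module.mem_annihilator.mp (h hr) s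
  have toS_surjective : Function.Surjective toS := fun t =>
    have ⟨r, hr⟩ := IsSimpleModule.toSpanSingleton_surjective R hs t
    ⟨Submodule.Quotient.mk r, hr⟩
  obtain ⟨g, hg⟩ := IsSemisimpleModule.lifting_property toS toS_surjective LinearMap.id
  obtain ⟨a, ha⟩ := Submodule.Quotient.mk_surjective _ (g s)
  have ha_notMem : a ∉ Module.annihilator R M := fun h0 => hs <| by
    rw [← LinearMap.id_apply (R := R) s, ← hg, LinearMap.comp_apply, ← ha,
      (Submodule.Quotient.mk_eq_zero _).mpr h0, map_zero]
  obtain ⟨m, hm⟩ : ∃ m : M, a • m ≠ 0 := by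
    simpa only [Module.mem_annihilator, not_forall] using ha_notMem
  let toM : (R ⧸ Module.annihilator R M) →ₗ[R] M :=
    Submodule.liftQ _ (LinearMap.toSpanSingleton R M m) fun r hr => Module.mem_annihilator.mp hr m
  refine ⟨toM ∘ₗ g, fun h0 => hm ?_⟩
  have : toM (g s) = 0 := LinearMap.congr_fun h0 s
  rwa [← ha] at this

theorem isUnit_one_sub_of_mem_jacobson {R : Type*} [Ring R] {x : R}
    (hx : x ∈ Ring.jacobson R) : IsUnit (1 - x) := by
  have exists_left_inv : ∀ y ∈ Ring.jacobson R, ∃ z, z * (1 - y) = 1 := fun y hy => by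
    rw [← Ideal.jacobson_bot] at hy
    obtain ⟨z, hz⟩ := Ideal.exists_mul_sub_mem_of_sub_one_mem_jacobson (1 - y)
      (by simpa using neg_mem hy)
    exact ⟨z, sub_eq_zero.mp hz⟩
  obtain ⟨z, hz⟩ := exists_left_inv x hx
  have hz' : 1 - -(z * x) = z := by rw [← hz]; noncomm_ring
  obtain ⟨w, hw⟩ := exists_left_inv (-(z * x)) (neg_mem (Ideal.mul_mem_left _ z hx))
  rw [hz'] at hw
  exact ⟨⟨1 - x, z, left_inv_eq_right_inv hw hz ▸ hw, hz⟩, rfl⟩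

section SelfInjective

variable {R : Type u} [Ring R] [Module.Injective R R]

theorem exists_eq_mul_of_injective {M : Type u} [AddCommGroup M] [Module R M]
    {f : M →ₗ[R] R} (hf : Function.Injective f) (g : M →ₗ[R] R) :
    ∃ a : R, ∀ x, g x = f x * a := by
  obtain ⟨h, hh⟩ := Module.Injective.out f hf g
  refine ⟨h 1, fun x => ?_⟩
  rw [← hh x, ← smul_eq_mul, ← map_smul, smul_eq_mul, mul_one]

theorem mul_eq_zero_of_mem_socle_of_mem_jacobson {x j : R} (hx : x ∈ socle R R)
    (hj : j ∈ Ring.jacobson R) : x * j = 0 := by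
  suffices socle R R ≤ LinearMap.ker (LinearMap.toSpanSingleton R R j) from this hx
  refine sSup_le fun N (_ : IsSimpleModule R N) y hy => ?_
  by_contra hyj
  let f : N →ₗ[R] R := LinearMap.toSpanSingleton R R j ∘ₗ N.subtype
  have hf : f ≠ 0 := fun h => hyj (LinearMap.congr_fun h ⟨y, hy⟩)
  obtain ⟨a, ha⟩ := exists_eq_mul_of_injective (LinearMap.injective_of_ne_zero hf) N.subtype
  have hya : y = y * j * a := ha ⟨y, hy⟩
  have hu : IsUnit (1 - j * a) := isUnit_one_sub_of_mem_jacobson (Ideal.mul_mem_right a _ hj)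
  have hy0 : y * (1 - j * a) = 0 := by rw [mul_sub, mul_one, ← mul_assoc, ← hya, sub_self]
  rw [hu.mul_left_eq_zero] at hy0
  exact hyj (hy0 ▸ zero_mem _)

variable [IsSemisimpleRing (R ⧸ Ring.jacobson R)]

theorem le_of_annihilator_le_annihilator {V W : Ideal R} [IsSemisimpleModule R V]
    [IsSemisimpleModule R W] [W.IsTwoSided] (h : W.annihilator ≤ V.annihilator) : V ≤ W := by
  have : IsSemisimpleModule R (R ⧸ W.annihilator) :=
    isSemisimpleModule_quotient_of_le (IsSemisimpleModule.jacobson_le_annihilator R W)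
  suffices (⊤ : Submodule R V) ≤ Submodule.comap V.subtype W from
    fun x hx => this (Submodule.mem_top (x := ⟨x, hx⟩))
  rw [← IsSemisimpleModule.sSup_simples_eq_top]
  refine sSup_le fun N (_ : IsSimpleModule R N) x hx => ?_
  obtain ⟨f, hf⟩ := exists_linearMap_ne_zero_of_annihilator_le
    (h.trans (N.subtype.annihilator_le_of_injective N.injective_subtype))
  have hWf : Function.Injective (W.subtype ∘ₗ f) :=
    W.injective_subtype.comp (LinearMap.injective_of_ne_zero hf)
  obtain ⟨a, ha⟩ := exists_eq_mul_of_injective hWf (V.subtype ∘ₗ N.subtype)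
  have hxa : (x : R) = f ⟨x, hx⟩ * a := ha ⟨x, hx⟩
  rw [Submodule.mem_comap, Submodule.subtype_apply, hxa]
  exact W.mul_mem_right a (f ⟨x, hx⟩).2

variable [IsAtomic (Ideal R)]

theorem mem_jacobson_of_forall_socle_mul_eq_zero {x : R} (h : ∀ y ∈ socle R R, y * x = 0) :
    x ∈ Ring.jacobson R := by
  obtain ⟨e, he, hxe⟩ := exists_mem_forall_sub_mul_mem (Ring.jacobson R) (Ideal.span {x})
  have socle_mul_e : ∀ y ∈ socle R R, y * e = 0 := fun y hy => by
    obtain ⟨r, rfl⟩ := Ideal.mem_span_singleton'.mp he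
    rw [← mul_assoc, h _ (Ideal.mul_mem_right r _ hy)]
  let f : R →ₗ[R] R := LinearMap.toSpanSingleton R R (1 - e)
  have hf : Function.Injective f := by
    refine LinearMap.ker_eq_bot.mp (eq_bot_of_disjoint_socle (Submodule.disjoint_def.mpr ?_))
    intro y hy (hfy : y * (1 - e) = 0)
    rwa [mul_sub, mul_one, socle_mul_e y hy, sub_zero] at hfy
  obtain ⟨c, hc⟩ := exists_eq_mul_of_injective hf LinearMap.id
  have he_eq : e = (e - e * e) * c := by simpa [f, mul_sub] using hc e
  have he_mem : e ∈ Ring.jacobson R := he_eq ▸ Ideal.mul_mem_right c _ (hxe e he)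
  have hx := hxe x (Ideal.mem_span_singleton_self x)
  exact (Submodule.sub_mem_iff_left _ (Ideal.mul_mem_left _ x he_mem)).mp hx

theorem le_of_socle_mul_le_socle_mul {I I' : Ideal R} (hI' : Ring.jacobson R ≤ I')
    (h : socle R R * I ≤ socle R R * I') : I ≤ I' := by
  intro x hx
  obtain ⟨e, he, hI'e⟩ := exists_mem_forall_sub_mul_mem (Ring.jacobson R) I'
  have hker : socle R R * I' ≤ LinearMap.ker (LinearMap.toSpanSingleton R R (1 - e)) := by
    refine Ideal.mul_le.mpr fun y hy z hz => LinearMap.mem_ker.mpr ?_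
    rw [LinearMap.toSpanSingleton_apply, smul_eq_mul, mul_assoc, mul_sub, mul_one]
    exact mul_eq_zero_of_mem_socle_of_mem_jacobson hy (hI'e z hz)
  have hxe : x - x * e ∈ Ring.jacobson R := by
    refine mem_jacobson_of_forall_socle_mul_eq_zero fun y hy => ?_
    have : y * x * (1 - e) = 0 := hker (h (Ideal.mul_mem_mul hy hx))
    rwa [mul_assoc, mul_sub, mul_one] at this
  exact (Submodule.sub_mem_iff_left _ (I'.mul_mem_left x he)).mp (hI' hxe)

variable (R) in
theorem annihilator_socle_le_jacobson : (socle R R).annihilator ≤ Ring.jacobson R := by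
  let 𝓘 : Set (Ideal R) := {I | Ring.jacobson R ≤ I ∧ I.IsTwoSided}
  let φ : Ideal R → Ideal R := fun I => (socle R R * I).annihilator
  have le_socle (I : Ideal R) : socle R R * I ≤ socle R R := Ideal.mul_le_left
  have isSemisimple (I : Ideal R) : IsSemisimpleModule R ↥(socle R R * I) :=
    isSemisimpleModule_of_le_socle (le_socle I)
  have mapsTo : Set.MapsTo φ 𝓘 𝓘 := fun I _ =>
    ⟨IsSemisimpleModule.jacobson_le_annihilator R _, inferInstanceAs (Ideal.IsTwoSided _)⟩
  have le_of_eq {I I' : Ideal R} (hI' : I' ∈ 𝓘) (h : φ I = φ I') : I ≤ I' :=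
    have := hI'.2
    le_of_socle_mul_le_socle_mul hI'.1 (le_of_annihilator_le_annihilator h.ge)
  have injOn : Set.InjOn φ 𝓘 := fun I hI I' hI' h =>
    le_antisymm (le_of_eq hI' h) (le_of_eq hI h.symm)
  have bijOn : Set.BijOn φ 𝓘 𝓘 :=
    ((finite_setOf_le_isTwoSided (Ring.jacobson R)).injOn_iff_bijOn_of_mapsTo mapsTo).mp injOn
  obtain ⟨I, -, hI⟩ := bijOn.surjOn ⟨le_rfl, inferInstance⟩
  exact hI ▸ Submodule.annihilator_mono (le_socle I)

end SelfInjective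

section Semiprimary

variable {R : Type*} [Ring R]

variable (R) in
theorem exists_isSimpleModule_submodule [IsSemiprimaryRing R] (M : Type*) [AddCommGroup M]
    [Module R M] [Nontrivial M] : ∃ N : Submodule R M, IsSimpleModule R N := by
  suffices Nontrivial M → ∃ N : Submodule R M, IsSimpleModule R N from this inferInstance
  refine IsSemiprimaryRing.induction R R M
    (P := fun M => Nontrivial M → ∃ N : Submodule R M, IsSimpleModule R N)
    (fun M _ _ _ _ _ _ _ => IsSemisimpleModule.exists_simple_submodule R M) ?_
  intro M _ _ _ _ JM exists_JM exists_quotient hM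
  rcases eq_or_ne JM ⊥ with hJM | hJM
  · let e := JM.quotEquivOfEqBot hJM
    obtain ⟨N, hN⟩ := exists_quotient e.toEquiv.nontrivial
    exact ⟨N.map e.toLinearMap, .congr (e.submoduleMap N).symm⟩
  · obtain ⟨N, hN⟩ := exists_JM (Submodule.nontrivial_iff_ne_bot.mpr hJM)
    exact ⟨N.map JM.subtype, .congr (Submodule.equivSubtypeMap JM N).symm⟩

instance isAtomic_submodule [IsSemiprimaryRing R] {M : Type*} [AddCommGroup M] [Module R M] :
    IsAtomic (Submodule R M) := by
  refine ⟨fun K => or_iff_not_imp_left.mpr fun hK => ?_⟩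
  have : Nontrivial K := Submodule.nontrivial_iff_ne_bot.mpr hK
  obtain ⟨N, hN⟩ := exists_isSimpleModule_submodule R K
  refine ⟨N.map K.subtype, isSimpleModule_iff_isAtom.mp ?_, Submodule.map_subtype_le K N⟩
  exact .congr (Submodule.equivSubtypeMap K N).symm

open scoped Pointwise in
theorem ideal_pow_eq_span_pow (I : Ideal R) [I.IsTwoSided] (n : ℕ) :
    I ^ n = Ideal.span ((I : Set R) ^ n) := by
  induction n with
  | zero =>
    rw [Submodule.pow_zero, Ideal.one_eq_top, pow_zero, ← Set.singleton_one,
      Ideal.span_singleton_one]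
  | succ n ih =>
    have : (Ideal.span (I : Set R)).IsTwoSided := by rwa [Ideal.span_eq]
    rw [Ideal.IsTwoSided.pow_succ, ih, pow_succ', ← Ideal.span_mul_span', Ideal.span_eq]

theorem mem_twoSidedIdeal_jacobson_bot {x : R} :
    x ∈ (⊥ : TwoSidedIdeal R).jacobson ↔ x ∈ Ring.jacobson R := by
  rw [← TwoSidedIdeal.mem_asIdeal, TwoSidedIdeal.asIdeal_jacobson, TwoSidedIdeal.bot_asIdeal,
    Ideal.jacobson_bot]

end Semiprimary

theorem IsSemiprimary.isSemiprimaryRing {A : Type*} [Ring A] (h : IsSemiprimary A) :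
    IsSemiprimaryRing A := by
  obtain ⟨hss, n, -, hn⟩ := h
  refine ⟨?_, n, ?_⟩
  · let toQuotient : (⊥ : TwoSidedIdeal A).jacobson.ringCon.Quotient →+* A ⧸ Ring.jacobson A :=
      RingCon.lift _ (Ideal.Quotient.mk (Ring.jacobson A)) fun x y hxy =>
        Ideal.Quotient.eq.mpr
          (mem_twoSidedIdeal_jacobson_bot.mp ((TwoSidedIdeal.rel_iff _ x y).mp hxy))
    refine toQuotient.isSemisimpleRing_of_surjective fun y => ?_
    obtain ⟨x, rfl⟩ := Ideal.Quotient.mk_surjective y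
    exact ⟨(x : (⊥ : TwoSidedIdeal A).jacobson.ringCon.Quotient), rfl⟩
  · rw [Ideal.jacobson_bot] at hn
    rw [ideal_pow_eq_span_pow, Submodule.zero_eq_bot, Ideal.span_eq_bot]
    intro x hx
    obtain ⟨f, rfl⟩ := Set.mem_pow.mp hx
    exact hn _ fun i => (f i).2

theorem simple_embeds_of_selfinjective_semiprimary_general
    (A : Type u) [Ring A] [IsSemisimpleRing (A ⧸ Ring.jacobson A)] [IsAtomic (Ideal A)]
    [Module.Injective A A] (S : Type v) [AddCommGroup S] [Module A S] [IsSimpleModule A S] :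
    (∃ f : S →ₗ[A] A, Function.Injective f) ∧ ∃ f : S →ₗ[A] A, f ≠ 0 := by
  have : IsSemisimpleModule A (A ⧸ (socle A A).annihilator) :=
    isSemisimpleModule_quotient_of_le (IsSemisimpleModule.jacobson_le_annihilator A _)
  obtain ⟨f, hf⟩ := exists_linearMap_ne_zero_of_annihilator_le
    ((annihilator_socle_le_jacobson A).trans (IsSemisimpleModule.jacobson_le_annihilator A S))
  have hinj : Function.Injective ((socle A A).subtype ∘ₗ f) :=
    (socle A A).injective_subtype.comp (LinearMap.injective_of_ne_zero hf)
  have := IsSimpleModule.nontrivial A S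
  exact ⟨⟨_, hinj⟩, _, LinearMap.ne_zero_of_injective hinj⟩

/-- For a left self-injective semiprimary ring `A`, every simple left `A`-module `S`
embeds into `A` as a left module; equivalently, `Hom_A(S, A) ≠ 0`. -/
theorem simple_embeds_of_selfinjective_semiprimary
    (A : Type u) [Ring A] (hsp : IsSemiprimary A) (hinj : Module.Injective A A) :
    ∀ (S : Type v) [AddCommGroup S] [Module A S], IsSimpleModule A S →
      (∃ f : S →ₗ[A] A, Function.Injective f) ∧ ∃ f : S →ₗ[A] A, f ≠ 0 := fun S _ _ _ =>
  have := hsp.isSemiprimaryRing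
  simple_embeds_of_selfinjective_semiprimary_general A S
end

section
/- A left self-injective semiprimary ring A is an injective cogenerator of the category of left A-modules, i.e. A is a left PF (pseudo-Frobenius) ring. -/
universe u v

open Cardinal

/-!
Let `J` be the Jacobson radical and `S` the left socle of `A`. Self-injectivity, together with the
fact that every nonzero left ideal contains a simple one, gives `J = {a | S a = 0}`. For an isotypic
component of `A / J`, let `I` be its preimage in `A` and `P` the preimage of the sum of the other
components, so that `I P ⊆ J`. Since `S I ≠ 0`, there is a simple left ideal `L ⊆ S I`, and
`L P ⊆ S J = 0`. Homomorphisms between left ideals are right multiplications and the ideals `P` are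
pairwise comaximal, so the left ideals `L` belonging to different components are not isomorphic.
There are as many components as isomorphism classes of simple modules, and finitely many, so every
simple module is isomorphic to some `L`. An injective module admitting nonzero homomorphisms from
all simple modules is a cogenerator.
-/

section Baer

variable {R Q M : Type*} [Ring R] [AddCommGroup Q] [Module R Q] [AddCommGroup M] [Module R M]

theorem exists_linearMap_apply_eq_of_baer (hQ : Module.Baer R Q) {m : M} {q : Q}
    (h : ∀ a : R, a • m = 0 → a • q = 0) : ∃ f : M →ₗ[R] Q, f m = q := by
  let ann := LinearMap.ker (LinearMap.toSpanSingleton R M m)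
  let i : (R ⧸ ann) →ₗ[R] M := ann.liftQ (LinearMap.toSpanSingleton R M m) le_rfl
  let g : (R ⧸ ann) →ₗ[R] Q := ann.liftQ (LinearMap.toSpanSingleton R Q q) h
  have hi : Function.Injective i :=
    LinearMap.ker_eq_bot.mp (Submodule.ker_liftQ_eq_bot _ _ _ le_rfl)
  obtain ⟨f, hf⟩ := hQ.extension_property i hi g
  refine ⟨f, ?_⟩
  calc f m = f (i (Submodule.Quotient.mk 1)) := by
        rw [ann.liftQ_apply, LinearMap.toSpanSingleton_apply_one]
    _ = g (Submodule.Quotient.mk 1) := LinearMap.congr_fun hf _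
    _ = q := (ann.liftQ_apply _ 1).trans (one_smul R q)

theorem exists_linearMap_apply_ne_zero_of_baer (hQ : Module.Baer R Q)
    (h : ∀ P : Ideal R, P.IsMaximal → ∃ f : (R ⧸ P) →ₗ[R] Q, f ≠ 0) {m : M} (hm : m ≠ 0) :
    ∃ f : M →ₗ[R] Q, f m ≠ 0 := by
  have ann_ne_top : LinearMap.ker (LinearMap.toSpanSingleton R M m) ≠ ⊤ := by
    rwa [Ideal.ne_top_iff_one, LinearMap.mem_ker, LinearMap.toSpanSingleton_apply_one]
  obtain ⟨P, hP, ann_le⟩ := Ideal.exists_le_maximal _ ann_ne_top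
  obtain ⟨g, hg⟩ := h P hP
  have g_one_ne_zero : g (Submodule.Quotient.mk 1) ≠ 0 := fun g_one ↦
    hg (Submodule.linearMap_qext _ (LinearMap.ext_ring g_one))
  obtain ⟨f, hf⟩ := exists_linearMap_apply_eq_of_baer (m := m) hQ
    (q := g (Submodule.Quotient.mk 1)) fun a ha ↦ by
      rw [← map_smul, ← Submodule.Quotient.mk_smul, smul_eq_mul, mul_one,
        (Submodule.Quotient.mk_eq_zero P).mpr (ann_le ha), map_zero]
  exact ⟨f, hf ▸ g_one_ne_zero⟩

theorem exists_mul_eq_of_baer (hR : Module.Baer R R) {t s : R}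
    (h : ∀ a : R, a * t = 0 → a * s = 0) : ∃ r, t * r = s := by
  obtain ⟨f, hf⟩ := exists_linearMap_apply_eq_of_baer hR h
  exact ⟨f 1, by rw [← smul_eq_mul, ← map_smul, smul_eq_mul, mul_one, hf]⟩

theorem linearMap_eq_zero_of_mul_eq_bot_of_baer (hR : Module.Baer R R) {K L P P' : Ideal R}
    [P.IsTwoSided] (hK : K * P = ⊥) (hL : L * P' = ⊥) (hPP' : P ⊔ P' = ⊤) (f : K →ₗ[R] L) :
    f = 0 := by
  ext x
  obtain ⟨r, hr⟩ := exists_mul_eq_of_baer hR (t := (x : R)) (s := f x) fun a ha ↦ by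
    rw [← smul_eq_mul, ← L.coe_smul, ← map_smul,
      show a • x = 0 from Subtype.ext ha, map_zero, L.coe_zero]
  obtain ⟨p, hp, p', hp', hpp'⟩ := Submodule.mem_sup.mp ((Ideal.eq_top_iff_one _).mp hPP')
  have hfp : (f x : R) * p = 0 := by
    rw [← hr, mul_assoc, ← Ideal.mem_bot, ← hK]
    exact Ideal.mul_mem_mul x.2 (P.mul_mem_left r hp)
  have hfp' : (f x : R) * p' = 0 := by
    rw [← Ideal.mem_bot, ← hL]
    exact Ideal.mul_mem_mul (f x).2 hp'
  rw [← mul_one (f x : R), ← hpp', mul_add, hfp, hfp', add_zero, LinearMap.zero_apply, L.coe_zero]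

end Baer

section SimpleModules

variable {R M S T : Type*} [Ring R] [AddCommGroup M] [Module R M]
  [AddCommGroup S] [Module R S] [AddCommGroup T] [Module R T]

theorem isSimpleModule_range_of_ne_zero [IsSimpleModule R S] {f : S →ₗ[R] M} (hf : f ≠ 0) :
    IsSimpleModule R (LinearMap.range f) :=
  .congr (LinearEquiv.ofInjective f (f.injective_or_eq_zero.resolve_right hf)).symm

theorem isAtomic_submodule_of_exists_isSimpleModule
    (h : ∀ N : Submodule R M, Nontrivial N → ∃ K : Submodule R N, IsSimpleModule R K) :
    IsAtomic (Submodule R M) where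
  eq_bot_or_exists_atom_le N := by
    refine or_iff_not_imp_left.mpr fun hN ↦ ?_
    obtain ⟨K, hK⟩ := h N (Submodule.nontrivial_iff_ne_bot.mpr hN)
    have e := K.equivMapOfInjective N.subtype N.subtype_injective
    exact ⟨K.map N.subtype, isSimpleModule_iff_isAtom.mp (.congr e.symm), N.map_subtype_le K⟩

theorem nonempty_linearEquiv_of_isotypicComponent_eq [IsSimpleModule R S] [IsSimpleModule R T]
    {N : Submodule R M} (e : S ≃ₗ[R] N)
    (h : isotypicComponent R M S = isotypicComponent R M T) : Nonempty (S ≃ₗ[R] T) := by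
  have : IsSimpleModule R N := .congr e.symm
  have hN : N ≤ isotypicComponent R M T :=
    h ▸ e.symm.isotypicComponent_eq (M := M) ▸ N.le_isotypicComponent
  obtain ⟨e'⟩ := isIsotypicOfType_submodule_iff.mp (.isotypicComponent R M T) N hN
  exact ⟨e.trans e'⟩

theorem exists_linearEquiv_of_finite_isotypicComponents [Finite (isotypicComponents R M)]
    {T : isotypicComponents R M → Type*} [∀ c, AddCommGroup (T c)] [∀ c, Module R (T c)]
    [∀ c, IsSimpleModule R (T c)] (hT : ∀ c d, Nonempty (T c ≃ₗ[R] T d) → c = d)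
    (hTM : ∀ c, ∃ N : Submodule R M, Nonempty (T c ≃ₗ[R] N)) [IsSimpleModule R S]
    {N : Submodule R M} (e : S ≃ₗ[R] N) : ∃ c, Nonempty (S ≃ₗ[R] T c) := by
  let component (c) : isotypicComponents R M := ⟨isotypicComponent R M (T c),
    let ⟨N, ⟨e⟩⟩ := hTM c
    ⟨N, .congr e.symm, e.isotypicComponent_eq⟩⟩
  have component_injective : Function.Injective component := fun c d hcd ↦
    let ⟨_, ⟨e⟩⟩ := hTM c
    hT c d (nonempty_linearEquiv_of_isotypicComponent_eq e (congrArg Subtype.val hcd))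
  obtain ⟨c, hc⟩ := Finite.surjective_of_injective component_injective
    ⟨isotypicComponent R M S, N, .congr e.symm, e.isotypicComponent_eq⟩
  exact ⟨c, nonempty_linearEquiv_of_isotypicComponent_eq e (congrArg Subtype.val hc).symm⟩

end SimpleModules

section JacobsonRadical

variable {R : Type*} [Ring R]

theorem exists_mul_one_add_eq_one_of_mem_jacobson {a : R} (ha : a ∈ Ring.jacobson R) :
    ∃ b, b * (1 + a) = 1 := by
  rw [← Ideal.jacobson_bot] at ha
  obtain ⟨b, hb⟩ := Ideal.exists_mul_sub_mem_of_sub_one_mem_jacobson (I := ⊥) (1 + a)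
    (by rwa [add_sub_cancel_left])
  exact ⟨b, sub_eq_zero.mp hb⟩

theorem isUnit_one_add_of_mem_jacobson {a : R} (ha : a ∈ Ring.jacobson R) : IsUnit (1 + a) := by
  obtain ⟨b, hb⟩ := exists_mul_one_add_eq_one_of_mem_jacobson ha
  have b_eq : 1 + -(b * a) = b := by
    rw [← sub_eq_add_neg, ← hb, mul_add, mul_one, add_sub_cancel_right]
  obtain ⟨c, hc⟩ := exists_mul_one_add_eq_one_of_mem_jacobson
    (neg_mem ((Ring.jacobson R).mul_mem_left b ha))
  rw [b_eq] at hc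
  exact ⟨⟨1 + a, b, left_inv_eq_right_inv hc hb ▸ hc, hb⟩, rfl⟩

theorem le_jacobson_of_forall_exists_one_add_mul_eq_one {I : Ideal R} [I.IsTwoSided]
    (h : ∀ a ∈ I, ∃ b, (1 + a) * b = 1) : I ≤ Ring.jacobson R := by
  rw [Ring.jacobson_eq_sInf_isMaximal]
  refine le_sInf fun P (hP : P.IsMaximal) a ha ↦ ?_
  by_contra haP
  obtain ⟨y, p, hp, hyp⟩ := hP.exists_inv haP
  have hya : y * a ∈ I := I.mul_mem_left y ha
  obtain ⟨b, hb⟩ := h _ (neg_mem hya)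
  rw [← sub_eq_add_neg, sub_eq_of_eq_add' hyp.symm] at hb
  obtain ⟨c, hc⟩ := h _ (I.mul_mem_right b hya)
  have b_eq : 1 + y * a * b = b := by rw [← hb, ← add_mul, add_comm, hyp, one_mul]
  rw [b_eq] at hc
  exact hP.ne_top (P.eq_top_iff_one.mpr (hc ▸ left_inv_eq_right_inv hb hc ▸ P.mul_mem_left b hp))

end JacobsonRadical

section Socle

variable {R : Type*} [Ring R]

theorem exists_isSimpleModule_coe_eq_image_mul_right {T : Ideal R} [IsSimpleModule R T] {t a : R}
    (ht : t ∈ T) (hta : t * a ≠ 0) :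
    ∃ L : Ideal R, IsSimpleModule R L ∧ (L : Set R) = (· * a) '' T := by
  let f : T →ₗ[R] R := LinearMap.toSpanSingleton R R a ∘ₗ T.subtype
  have hf : f ≠ 0 := fun h ↦ hta (LinearMap.congr_fun h ⟨t, ht⟩)
  refine ⟨LinearMap.range f, isSimpleModule_range_of_ne_zero hf, ?_⟩
  ext x
  simp [f]

variable (R) in
/-- The right annihilator of the left socle of `R`, that is, of the sum of all simple left ideals
of `R`. It is a two-sided ideal. -/
def socleRightAnnihilator : Ideal R where
  carrier := {a | ∀ L : Ideal R, IsSimpleModule R L → ∀ x ∈ L, x * a = 0}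
  zero_mem' _ _ x _ := mul_zero x
  add_mem' ha hb L hL x hx := by rw [mul_add, ha L hL x hx, hb L hL x hx, add_zero]
  smul_mem' r a ha T hT x hx := by
    rw [smul_eq_mul, ← mul_assoc]
    by_cases hxr : x * r = 0
    · rw [hxr, zero_mul]
    obtain ⟨L, hL, L_eq⟩ := exists_isSimpleModule_coe_eq_image_mul_right hx hxr
    exact ha L hL _ (L_eq.ge ⟨x, hx, rfl⟩)

theorem mem_socleRightAnnihilator {a : R} : a ∈ socleRightAnnihilator R ↔
    ∀ L : Ideal R, IsSimpleModule R L → ∀ x ∈ L, x * a = 0 :=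
  Iff.rfl

instance : (socleRightAnnihilator R).IsTwoSided where
  mul_mem_of_left b ha L hL x hx := by rw [← mul_assoc, ha L hL x hx, zero_mul]

theorem jacobson_le_socleRightAnnihilator_of_baer (hR : Module.Baer R R) :
    Ring.jacobson R ≤ socleRightAnnihilator R := by
  intro j hj L _ x hx
  by_contra hxj
  let f : L →ₗ[R] R := LinearMap.toSpanSingleton R R j ∘ₗ L.subtype
  have hf : Function.Injective f := f.injective_or_eq_zero.resolve_right fun h ↦
    hxj (LinearMap.congr_fun h ⟨x, hx⟩)
  obtain ⟨g, hg⟩ := exists_mul_eq_of_baer hR (t := x * j) (s := x) fun a ha ↦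
    congrArg Subtype.val (hf (a₁ := a • ⟨x, hx⟩) (a₂ := 0) (by simpa [f, mul_assoc] using ha))
  have hunit : IsUnit (1 + -(j * g)) :=
    isUnit_one_add_of_mem_jacobson (neg_mem ((Ring.jacobson R).mul_mem_right g hj))
  have hx0 : x * (1 + -(j * g)) = 0 := by
    rw [mul_add, mul_one, mul_neg, ← mul_assoc, hg, add_neg_cancel]
  exact hxj (by rw [hunit.mul_left_eq_zero.mp hx0, zero_mul])

theorem socleRightAnnihilator_le_jacobson_of_baer (hR : Module.Baer R R) [IsAtomic (Ideal R)] :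
    socleRightAnnihilator R ≤ Ring.jacobson R := by
  refine le_jacobson_of_forall_exists_one_add_mul_eq_one fun a ha ↦
    exists_mul_eq_of_baer hR fun b hb ↦ ?_
  rw [mul_one]
  by_contra hb0
  obtain ⟨L, hL, hLb⟩ := (eq_bot_or_exists_atom_le (Ideal.span {b})).resolve_left
    (mt Ideal.span_singleton_eq_bot.mp hb0)
  refine hL.1 ((Submodule.eq_bot_iff L).mpr fun x hx ↦ ?_)
  obtain ⟨c, rfl⟩ := Ideal.mem_span_singleton'.mp (hLb hx)
  have hcba : c * b * a = 0 := ha L (isSimpleModule_iff_isAtom.mpr hL) _ hx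
  calc c * b = c * (b * (1 + a)) := by rw [mul_add, mul_one, mul_add, ← mul_assoc, hcba, add_zero]
    _ = 0 := by rw [hb, mul_zero]

theorem exists_isSimpleModule_mul_eq_bot_of_baer (hR : Module.Baer R R) [IsAtomic (Ideal R)]
    {I P : Ideal R} (hI : ¬ I ≤ Ring.jacobson R) (hIP : I * P ≤ Ring.jacobson R) :
    ∃ L : Ideal R, IsSimpleModule R L ∧ L * P = ⊥ := by
  obtain ⟨a, ha, haJ⟩ := SetLike.not_le_iff_exists.mp hI
  have ha_socle := mt (@socleRightAnnihilator_le_jacobson_of_baer _ _ hR _ a) haJ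
  simp only [mem_socleRightAnnihilator, not_forall] at ha_socle
  obtain ⟨T, hT, t, ht, hta⟩ := ha_socle
  obtain ⟨L, hL, L_eq⟩ := exists_isSimpleModule_coe_eq_image_mul_right ht hta
  refine ⟨L, hL, eq_bot_iff.mpr (Ideal.mul_le.mpr fun x hx p hp ↦ ?_)⟩
  obtain ⟨y, hy, rfl⟩ := L_eq.le hx
  rw [Ideal.mem_bot, mul_assoc]
  exact jacobson_le_socleRightAnnihilator_of_baer hR (hIP (Ideal.mul_mem_mul ha hp)) T hT y hy

end Socle

section IsotypicComplement

variable {R M : Type*} [Ring R] [AddCommGroup M] [Module R M]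

/-- The sum of all isotypic components of `M` other than `c`. If `M` is semisimple and `c` is one of
its isotypic components, this is the unique complement of `c`. -/
def isotypicComplement (c : Submodule R M) : Submodule R M :=
  sSup (isotypicComponents R M \ {c})

theorem disjoint_isotypicComplement {c : Submodule R M} (hc : c ∈ isotypicComponents R M) :
    Disjoint c (isotypicComplement c) :=
  sSupIndep_isotypicComponents R M hc

theorem isFullyInvariant_isotypicComplement (c : Submodule R M) :
    (isotypicComplement c).IsFullyInvariant :=
  (fullyInvariantSubmodule R M).sSupClosed fun _ hd ↦ .of_mem_isotypicComponents hd.1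

theorem isotypicComplement_sup_isotypicComplement [IsSemisimpleModule R M] {c d : Submodule R M}
    (hcd : c ≠ d) : isotypicComplement c ⊔ isotypicComplement d = ⊤ := by
  rw [← top_le_iff, ← sSup_isotypicComponents R M]
  refine sSup_le fun e he ↦ ?_
  by_cases hec : e = c
  · exact le_sup_of_le_right (le_sSup ⟨he, hec ▸ hcd⟩)
  · exact le_sup_of_le_left (le_sSup ⟨he, hec⟩)

theorem isTwoSided_comap_mkQ {I : Ideal R} [I.IsTwoSided] {N : Submodule R (R ⧸ I)}
    (hN : N.IsFullyInvariant) : Ideal.IsTwoSided (N.comap I.mkQ) where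
  mul_mem_of_left {a} b ha := by
    have hI : I ≤ Submodule.comap (LinearMap.toSpanSingleton R R b) I :=
      fun x hx ↦ I.mul_mem_right b hx
    exact hN (Submodule.mapQ I I (LinearMap.toSpanSingleton R R b) hI) ha

theorem comap_mkQ_sup_comap_mkQ_eq_top {P : Submodule R M} {N K : Submodule R (M ⧸ P)}
    (h : N ⊔ K = ⊤) : N.comap P.mkQ ⊔ K.comap P.mkQ = ⊤ := by
  rw [← sup_eq_right.mpr (le_sup_of_le_left (P.le_comap_mkQ N)), ← P.comap_map_mkQ,
    Submodule.map_sup_comap_of_surjective P.mkQ_surjective, h, Submodule.comap_top]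

theorem exists_isSimpleModule_mul_comap_isotypicComplement_eq_bot_of_baer (hR : Module.Baer R R)
    [IsAtomic (Ideal R)] {c : Submodule R (R ⧸ Ring.jacobson R)}
    (hc : c ∈ isotypicComponents R (R ⧸ Ring.jacobson R)) :
    ∃ L : Ideal R, IsSimpleModule R L ∧
      L * (isotypicComplement c).comap (Ring.jacobson R).mkQ = ⊥ := by
  let I : Ideal R := c.comap (Ring.jacobson R).mkQ
  have : I.IsTwoSided := isTwoSided_comap_mkQ (.of_mem_isotypicComponents hc)
  have hI : ¬ I ≤ Ring.jacobson R := fun hle ↦ by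
    refine (bot_lt_isotypicComponents hc).ne' (Submodule.comap_injective_of_surjective
      (Ring.jacobson R).mkQ_surjective ?_)
    rw [Submodule.comap_bot, Submodule.ker_mkQ]
    exact hle.antisymm (Submodule.le_comap_mkQ _ c)
  refine exists_isSimpleModule_mul_eq_bot_of_baer hR hI (Ideal.mul_le_inf.trans ?_)
  rw [← Submodule.comap_inf, (disjoint_isotypicComplement hc).eq_bot, Submodule.comap_bot,
    Submodule.ker_mkQ]

theorem exists_linearEquiv_submodule_quotient_jacobson
    [IsSemisimpleModule R (R ⧸ Ring.jacobson R)] (S : Type*) [AddCommGroup S] [Module R S]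
    [hS : IsSimpleModule R S] : ∃ N : Submodule R (R ⧸ Ring.jacobson R), Nonempty (S ≃ₗ[R] N) := by
  obtain ⟨P, hP, ⟨e⟩⟩ := isSimpleModule_iff_quot_maximal.mp hS
  obtain ⟨N, ⟨e'⟩⟩ := IsSemisimpleModule.exists_submodule_linearEquiv_quotient
    (Submodule.map (Ring.jacobson R).mkQ P)
  have e'' := Submodule.quotientQuotientEquivQuotient _ P (Ring.jacobson_le_of_isMaximal P)
  exact ⟨N, ⟨e.trans (e''.symm.trans e'.symm)⟩⟩

end IsotypicComplement

section Kasch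

variable {R : Type*} [Ring R]

theorem isSemisimpleModule_quotient_iff_isSemisimpleRing (I : Ideal R) [I.IsTwoSided] :
    IsSemisimpleModule R (R ⧸ I) ↔ IsSemisimpleRing (R ⧸ I) :=
  let identity : (R ⧸ I) →ₛₗ[Ideal.Quotient.mk I] (R ⧸ I) :=
    { AddMonoidHom.id (R ⧸ I) with map_smul' := fun _ _ ↦ rfl }
  identity.isSemisimpleModule_iff_of_bijective Function.bijective_id

theorem exists_linearEquiv_ideal_of_baer (hR : Module.Baer R R)
    [IsSemisimpleRing (R ⧸ Ring.jacobson R)] [IsAtomic (Ideal R)]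
    (S : Type*) [AddCommGroup S] [Module R S] [IsSimpleModule R S] :
    ∃ L : Ideal R, Nonempty (S ≃ₗ[R] L) := by
  have : IsSemisimpleModule R (R ⧸ Ring.jacobson R) :=
    (isSemisimpleModule_quotient_iff_isSemisimpleRing _).mpr inferInstance
  choose L L_simple L_mul using fun c : isotypicComponents R (R ⧸ Ring.jacobson R) ↦
    exists_isSimpleModule_mul_comap_isotypicComplement_eq_bot_of_baer hR c.2
  have L_injective (c d) : Nonempty (L c ≃ₗ[R] L d) → c = d := by
    rintro ⟨e⟩
    by_contra hcd
    have : Ideal.IsTwoSided ((isotypicComplement c.1).comap (Ring.jacobson R).mkQ) :=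
      isTwoSided_comap_mkQ (isFullyInvariant_isotypicComplement _)
    have e_eq_zero : e.toLinearMap = 0 :=
      linearMap_eq_zero_of_mul_eq_bot_of_baer hR (L_mul c) (L_mul d)
        (comap_mkQ_sup_comap_mkQ_eq_top
          (isotypicComplement_sup_isotypicComplement (Subtype.coe_ne_coe.mpr hcd))) _
    have := IsSimpleModule.nontrivial R (L c)
    exact LinearMap.ne_zero_of_injective e.injective e_eq_zero
  obtain ⟨N, ⟨e⟩⟩ := exists_linearEquiv_submodule_quotient_jacobson (R := R) S
  obtain ⟨c, hc⟩ := exists_linearEquiv_of_finite_isotypicComponents L_injective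
    (fun c ↦ exists_linearEquiv_submodule_quotient_jacobson (L c)) e
  exact ⟨L c, hc⟩

theorem exists_linearMap_quotient_ne_zero_of_baer (hR : Module.Baer R R)
    [IsSemisimpleRing (R ⧸ Ring.jacobson R)] [IsAtomic (Ideal R)] (P : Ideal R) [P.IsMaximal] :
    ∃ f : (R ⧸ P) →ₗ[R] R, f ≠ 0 := by
  have : IsSimpleModule R (R ⧸ P) := isSimpleModule_iff_quot_maximal.mpr ⟨P, ‹_›, ⟨.refl R _⟩⟩
  have := IsSimpleModule.nontrivial R (R ⧸ P)
  obtain ⟨L, ⟨e⟩⟩ := exists_linearEquiv_ideal_of_baer hR (R ⧸ P)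
  exact ⟨L.subtype ∘ₗ e.toLinearMap,
    LinearMap.ne_zero_of_injective (L.subtype_injective.comp e.injective)⟩

end Kasch

section Semiprimary

variable {R : Type*} [Ring R]

theorem exists_isSimpleModule_of_injective {M N : Type*} [AddCommGroup M] [Module R M]
    [AddCommGroup N] [Module R N] {f : M →ₗ[R] N} (hf : Function.Injective f)
    (h : ∃ K : Submodule R M, IsSimpleModule R K) : ∃ K : Submodule R N, IsSimpleModule R K :=
  let ⟨K, _⟩ := h
  ⟨K.map f, .congr (K.equivMapOfInjective f hf).symm⟩

theorem exists_isSimpleModule_of_isSemiprimaryRing [IsSemiprimaryRing R] (M : Type*)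
    [AddCommGroup M] [Module R M] [Nontrivial M] : ∃ K : Submodule R M, IsSimpleModule R K := by
  refine IsSemiprimaryRing.induction R R M
    (P := fun M ↦ Nontrivial M → ∃ K : Submodule R M, IsSimpleModule R K) ?_ ?_ ‹_›
  · intro M _ _ _ _ _ _ _
    exact IsSemisimpleModule.exists_simple_submodule R M
  · intro M _ _ _ _ N hN hMN _
    by_cases hN_bot : N = ⊥
    · let e := N.quotEquivOfEqBot hN_bot
      exact exists_isSimpleModule_of_injective (f := e.toLinearMap) e.injective (hMN e.nontrivial)
    · exact exists_isSimpleModule_of_injective N.subtype_injective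
        (hN (Submodule.nontrivial_iff_ne_bot.mpr hN_bot))

theorem isAtomic_submodule_of_isSemiprimaryRing [IsSemiprimaryRing R] (M : Type*)
    [AddCommGroup M] [Module R M] : IsAtomic (Submodule R M) :=
  isAtomic_submodule_of_exists_isSimpleModule fun N _ ↦ exists_isSimpleModule_of_isSemiprimaryRing N

theorem pow_le_of_forall_list_prod_mem {I K : Ideal R} {n : ℕ}
    (h : ∀ l : List R, l.length = n → (∀ a ∈ l, a ∈ I) → l.prod ∈ K) : I ^ n ≤ K := by
  induction n generalizing K with
  | zero => exact K.eq_top_iff_one.mpr (h [] rfl (by simp)) ▸ le_top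
  | succ n ih =>
    rw [Submodule.pow_succ]
    refine Ideal.mul_le.mpr fun a ha b hb ↦ ?_
    refine ih (K := Submodule.comap (LinearMap.toSpanSingleton R R b) K) (fun l hl hlI ↦ ?_) ha
    simpa using h (l ++ [b]) (by simp [hl]) (by simpa [or_imp, forall_and] using ⟨hlI, hb⟩)

theorem IsSemiprimary.isSemiprimaryRing_s12 (hR : IsSemiprimary R) : IsSemiprimaryRing R where
  isSemisimpleRing := by
    obtain ⟨_, -⟩ := hR
    let c := (⊥ : TwoSidedIdeal R).jacobson.ringCon
    have c_le : c ≤ RingCon.ker (Ideal.Quotient.mk (Ring.jacobson R)) := fun {x y} hxy ↦ by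
      rw [TwoSidedIdeal.rel_iff, ← TwoSidedIdeal.mem_asIdeal, TwoSidedIdeal.asIdeal_jacobson,
        TwoSidedIdeal.bot_asIdeal, Ideal.jacobson_bot] at hxy
      exact Ideal.Quotient.eq.mpr hxy
    exact RingHom.isSemisimpleRing_of_surjective
      (c.lift (Ideal.Quotient.mk (Ring.jacobson R)) c_le)
      (RingCon.lift_surjective_of_surjective c_le Ideal.Quotient.mk_surjective)
  isNilpotent := by
    obtain ⟨-, n, -, hn⟩ := hR
    refine ⟨n, eq_bot_iff.mpr (pow_le_of_forall_list_prod_mem fun l hl hlJ ↦ ?_)⟩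
    subst hl
    rw [Ideal.mem_bot, ← l.ofFn_get]
    exact hn l.get fun i ↦ Ideal.jacobson_bot (R := R) ▸ hlJ _ (l.get_mem i)

end Semiprimary

section Cogenerator

variable {R : Type*} [Ring R]

theorem exists_injective_linearMap_pi {M Q : Type*} [AddCommGroup M] [Module R M]
    [AddCommGroup Q] [Module R Q] (h : ∀ m : M, m ≠ 0 → ∃ f : M →ₗ[R] Q, f m ≠ 0) :
    ∃ f : M →ₗ[R] ({m : M // m ≠ 0} → Q), Function.Injective f := by
  choose f hf using h
  refine ⟨LinearMap.pi fun m ↦ f m m.2, (injective_iff_map_eq_zero _).mpr fun m hm ↦ ?_⟩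
  by_contra hm0
  exact hf m hm0 (congrFun hm ⟨m, hm0⟩)

end Cogenerator

theorem selfinjective_semiprimary_is_left_PF_general
    (A : Type u) [Ring A] [IsSemisimpleRing (A ⧸ Ring.jacobson A)] [IsAtomic (Ideal A)]
    (hinj : Module.Injective A A) :
    Module.Injective A A ∧
    ∀ (M : Type v) [AddCommGroup M] [Module A M],
      ∃ (ι : Type v) (f : M →ₗ[A] (ι → A)), Function.Injective f := by
  have hA : Module.Baer A A := .of_injective hinj
  refine ⟨hinj, fun M _ _ ↦ ⟨_, exists_injective_linearMap_pi fun m hm ↦ ?_⟩⟩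
  exact exists_linearMap_apply_ne_zero_of_baer hA
    (fun P _ ↦ exists_linearMap_quotient_ne_zero_of_baer hA P) hm

/-- A left self-injective semiprimary ring `A` is a left PF-ring: the left module `A` is
injective and it is a cogenerator, i.e. every left `A`-module embeds into a direct
product of copies of `A`. -/
theorem selfinjective_semiprimary_is_left_PF
    (A : Type u) [Ring A] (hsp : IsSemiprimary A) (hinj : Module.Injective A A) :
    Module.Injective A A ∧
    ∀ (M : Type v) [AddCommGroup M] [Module A M],
      ∃ (ι : Type v) (f : M →ₗ[A] (ι → A)), Function.Injective f := by
  have := hsp.isSemiprimaryRing_s12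
  have := isAtomic_submodule_of_isSemiprimaryRing (R := A) A
  exact selfinjective_semiprimary_is_left_PF_general A hinj
end
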